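/- Let d ≥ 2, ν ∈ (0,2), γ < 0, λ ∈ (0,ν), and let r ∈ (max{d/(d+ν), (ν+λ)/(2ν), (2d−(ν−λ))/(2d)}, 1). There exists a constant C = C(λ,d,ν,γ,r) > 0 such that for every N ≥ 2 and every symmetric probability density F^N on ℝ^{dN} (invariant under permutations of its N coordinates in ℝ^d): sup_{i≠j} ∫_{ℝ^{dN}} |v_i − v_j|^{−λ} F^N(V) dV ≤ C ( I^N_{ν,γ}(F^N) + ∫_{ℝ^{dN}} |v₁|^{−γ r/(1−r)} F^N(V) dV + 1 ). -/

import Mathlib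

open MeasureTheory ENNReal

noncomputable section

/-- `ℝ^d` as a Euclidean space. -/
abbrev Euc (d : ℕ) := EuclideanSpace ℝ (Fin d)

/-- Japanese bracket `⟨x⟩ = √(1+|x|²)`. -/
def jap {d : ℕ} (x : Euc d) : ℝ := Real.sqrt (1 + ‖x‖^2)

/-- Fractional Sobolev seminorm squared `|f|²_{H^s(ℝ^d)}`, valued in `[0,∞]`. -/
def fracSobolevSq (d : ℕ) (s : ℝ) (f : Euc d → ℝ) : ℝ≥0∞ :=
  ∫⁻ x : Euc d, ∫⁻ y : Euc d, ENNReal.ofReal ((f x - f y)^2 / ‖x - y‖ ^ ((d : ℝ) + 2*s))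

/-- Weighted normalized fractional Fisher information `I^N_{ν,γ}`, valued in `[0,∞]`. -/
def fisherInfo (d N : ℕ) (ν γ : ℝ) (G : (Fin N → Euc d) → ℝ) : ℝ≥0∞ :=
  (N : ℝ≥0∞)⁻¹ * ∑ i : Fin N, ∫⁻ V : Fin N → Euc d, ∫⁻ w : Euc d,
    ENNReal.ofReal ((jap (V i) ^ (γ/2) * Real.sqrt (G V)
      - jap w ^ (γ/2) * Real.sqrt (G (Function.update V i w)))^2
      / ‖V i - w‖ ^ ((d : ℝ) + ν))

/-- A probability density: measurable, nonnegative, total mass one. -/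
def IsProbDensity {α : Type*} [MeasureSpace α] (f : α → ℝ) : Prop :=
  Measurable f ∧ (∀ x, 0 ≤ f x) ∧ ∫⁻ x, ENNReal.ofReal (f x) = 1

/-- A symmetric (exchangeable) probability density on `(ℝ^d)^N`. -/
def IsSymDensity (d N : ℕ) (F : (Fin N → Euc d) → ℝ) : Prop :=
  IsProbDensity F ∧ ∀ (σ : Equiv.Perm (Fin N)) (V : Fin N → Euc d), F (V ∘ σ) = F V

lemma meas_and {α : Type*} [MeasurableSpace α] {f g h k : α → ℝ} (hf : Measurable f)
    (hg : Measurable g) (hh : Measurable h) (hk : Measurable k) :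
    MeasurableSet {x | f x ≤ g x ∧ h x < k x} :=
  (measurableSet_le hf hg).inter (measurableSet_lt hh hk)

lemma meas_and2 {α : Type*} [MeasurableSpace α] {f g h k : α → ℝ} (hf : Measurable f)
    (hg : Measurable g) (hh : Measurable h) (hk : Measurable k) :
    MeasurableSet {x | h x < k x ∧ f x ≤ g x} :=
  (measurableSet_lt hh hk).inter (measurableSet_le hf hg)

/-- core one-delta estimate -/
lemma hardy_core (d : ℕ) (ν R b : ℝ) (hν : 0 < ν) (hR : 1 < R) (hb : 0 < b)
    (hvol : ∀ s : ℝ, 0 < s → volume {y : Euc d | R * s ≤ ‖y‖ ∧ ‖y‖ < 2 * R * s}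
      = ENNReal.ofReal (b * s ^ (d:ℝ)))
    (hvol2 : ∀ s : ℝ, 0 < s → volume {x : Euc d | s < 2 * R * ‖x‖ ∧ R * ‖x‖ ≤ s}
      ≤ ENNReal.ofReal ((s/(2*R)) ^ ((d:ℝ) + ν) * s ^ (-ν) * (b / 4)))
    (g : Euc d → ℝ) (hg : Measurable g) (hg2 : ∫⁻ x, ENNReal.ofReal (g x ^ 2) ≠ ⊤)
    (δ : ℝ) (hδ : 0 < δ) :
    ∫⁻ x in {x : Euc d | δ ≤ ‖x‖}, ENNReal.ofReal (‖x‖ ^ (-ν) * g x ^ 2) ≤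
      ENNReal.ofReal (4 * (3 * R) ^ ((d:ℝ) + ν) / b) *
        ∫⁻ x, ∫⁻ y, ENNReal.ofReal ((g x - g y)^2 / ‖x - y‖ ^ ((d : ℝ) + ν)) := by
  set S := ∫⁻ x, ∫⁻ y, ENNReal.ofReal ((g x - g y)^2 / ‖x - y‖ ^ ((d : ℝ) + ν)) with hS
  set H := ∫⁻ x in {x : Euc d | δ ≤ ‖x‖}, ENNReal.ofReal (‖x‖ ^ (-ν) * g x ^ 2) with hH
  have hms : MeasurableSet {x : Euc d | δ ≤ ‖x‖} := measurableSet_le measurable_const measurable_norm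
  have hfin : H ≠ ⊤ := by
    have h1 : H ≤ ∫⁻ x, ENNReal.ofReal (δ ^ (-ν)) * ENNReal.ofReal (g x ^ 2) := by
      refine le_trans (setLIntegral_mono' hms (fun x hx => ?_)) (setLIntegral_le_lintegral _ _)
      rw [← ENNReal.ofReal_mul (by positivity)]
      refine ENNReal.ofReal_le_ofReal (mul_le_mul_of_nonneg_right ?_ (sq_nonneg _))
      exact Real.rpow_le_rpow_of_nonpos hδ hx (by linarith)
    rw [lintegral_const_mul _ (by fun_prop)] at h1
    exact ne_top_of_le_ne_top (ENNReal.mul_ne_top ENNReal.ofReal_ne_top hg2) h1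
  -- the set of pairs
  let A : Set (Euc d × Euc d) := {p | δ ≤ ‖p.1‖ ∧ R * ‖p.1‖ ≤ ‖p.2‖ ∧ ‖p.2‖ < 2 * R * ‖p.1‖}
  have hA : MeasurableSet A := by
    have h1 : MeasurableSet {p : Euc d × Euc d | δ ≤ ‖p.1‖} :=
      measurableSet_le (by fun_prop) (by fun_prop)
    have h2 : MeasurableSet {p : Euc d × Euc d | R * ‖p.1‖ ≤ ‖p.2‖ ∧ ‖p.2‖ < 2 * R * ‖p.1‖} :=
      meas_and (by fun_prop) (by fun_prop) (by fun_prop) (by fun_prop)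
    exact h1.inter h2
  let K : Euc d × Euc d → ℝ≥0∞ := A.indicator (fun p => ENNReal.ofReal (‖p.1‖ ^ (-((d:ℝ) + ν))))
  have hK : Measurable K := Measurable.indicator (by fun_prop) hA
  have key : ENNReal.ofReal b * H ≤ ∫⁻ x, ∫⁻ y,
      (ENNReal.ofReal (2 * (3*R) ^ ((d:ℝ)+ν)) *
        ENNReal.ofReal ((g x - g y)^2 / ‖x - y‖ ^ ((d : ℝ) + ν))
        + K (x,y) * ENNReal.ofReal (2 * g y ^ 2)) := by
    rw [hH, ← lintegral_const_mul _ (by fun_prop), ← lintegral_indicator hms]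
    refine lintegral_mono fun x => ?_
    by_cases hx : δ ≤ ‖x‖
    swap
    · simp [Set.indicator, hx]
    have hx0 : 0 < ‖x‖ := hδ.trans_le hx
    rw [Set.indicator_of_mem (by exact hx)]
    have e1 : ENNReal.ofReal b * ENNReal.ofReal (‖x‖ ^ (-ν) * g x ^ 2)
        = ∫⁻ y in {y : Euc d | R * ‖x‖ ≤ ‖y‖ ∧ ‖y‖ < 2 * R * ‖x‖},
            ENNReal.ofReal (‖x‖ ^ (-((d:ℝ) + ν)) * g x ^ 2) := by
      rw [setLIntegral_const, hvol _ hx0, ← ENNReal.ofReal_mul (by positivity),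
        ← ENNReal.ofReal_mul (by positivity)]
      congr 1
      rw [neg_add, Real.rpow_add hx0, Real.rpow_neg hx0.le (d:ℝ)]
      have : ‖x‖ ^ (d:ℝ) ≠ 0 := by positivity
      field_simp
    have hm2 : MeasurableSet {y : Euc d | R * ‖x‖ ≤ ‖y‖ ∧ ‖y‖ < 2 * R * ‖x‖} :=
      meas_and (by fun_prop) (by fun_prop) (by fun_prop) (by fun_prop)
    rw [e1, ← lintegral_indicator hm2]
    refine lintegral_mono fun y => ?_
    by_cases hy : R * ‖x‖ ≤ ‖y‖ ∧ ‖y‖ < 2 * R * ‖x‖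
    swap
    · simp [Set.indicator, hy]
    rw [Set.indicator_of_mem (by exact hy)]
    have hKxy : K (x,y) = ENNReal.ofReal (‖x‖ ^ (-((d:ℝ) + ν))) :=
      Set.indicator_of_mem (show (x,y) ∈ A from ⟨hx, hy⟩) _
    rw [hKxy, ← ENNReal.ofReal_mul (by positivity), ← ENNReal.ofReal_mul (by positivity),
      ← ENNReal.ofReal_add (by positivity) (by positivity)]
    refine ENNReal.ofReal_le_ofReal ?_
    have hxy : 0 < ‖x - y‖ := by
      rw [norm_pos_iff, sub_ne_zero]
      rintro rfl
      nlinarith [hy.1]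
    have hle : ‖x - y‖ ≤ 3 * R * ‖x‖ := by
      have := norm_sub_le x y
      nlinarith [hy.2]
    have hk : ‖x‖ ^ (-((d:ℝ) + ν)) ≤ (3*R) ^ ((d:ℝ)+ν) / ‖x - y‖ ^ ((d : ℝ) + ν) := by
      rw [Real.rpow_neg hx0.le, inv_eq_one_div, div_le_div_iff₀ (by positivity) (by positivity),
        one_mul, ← Real.mul_rpow (by positivity) (by positivity)]
      exact Real.rpow_le_rpow hxy.le hle (by positivity)
    have hk0 : 0 ≤ ‖x‖ ^ (-((d:ℝ) + ν)) := by positivity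
    have hsq : g x ^ 2 ≤ 2 * (g x - g y)^2 + 2 * g y ^ 2 := by nlinarith [sq_nonneg (g x - 2 * g y)]
    calc ‖x‖ ^ (-((d:ℝ) + ν)) * g x ^ 2 
        ≤ ‖x‖ ^ (-((d:ℝ) + ν)) * (2 * (g x - g y)^2 + 2 * g y ^ 2) := by gcongr
      _ = ‖x‖ ^ (-((d:ℝ) + ν)) * (2 * (g x - g y)^2) + ‖x‖ ^ (-((d:ℝ) + ν)) * (2 * g y ^ 2) := by ring
      _ ≤ (3*R) ^ ((d:ℝ)+ν) / ‖x - y‖ ^ ((d : ℝ) + ν) * (2 * (g x - g y)^2) 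
          + ‖x‖ ^ (-((d:ℝ) + ν)) * (2 * g y ^ 2) := by gcongr
      _ = _ := by ring
  have hmS : Measurable (fun p : Euc d × Euc d =>
      ENNReal.ofReal ((g p.1 - g p.2)^2 / ‖p.1 - p.2‖ ^ ((d : ℝ) + ν))) := by fun_prop
  have hsplit : ∫⁻ x, ∫⁻ y,
      (ENNReal.ofReal (2 * (3*R) ^ ((d:ℝ)+ν)) *
        ENNReal.ofReal ((g x - g y)^2 / ‖x - y‖ ^ ((d : ℝ) + ν))
        + K (x,y) * ENNReal.ofReal (2 * g y ^ 2)) = 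
      ENNReal.ofReal (2 * (3*R) ^ ((d:ℝ)+ν)) * S +
        ∫⁻ x, ∫⁻ y, K (x,y) * ENNReal.ofReal (2 * g y ^ 2) := by
    rw [hS, ← lintegral_const_mul _ (hmS.lintegral_prod_right'), ← lintegral_add_left]
    · refine lintegral_congr fun x => ?_
      rw [← lintegral_const_mul _ (by fun_prop), lintegral_add_left (by fun_prop)]
    · exact (hmS.lintegral_prod_right').const_mul _
  have hsec : ∫⁻ x, ∫⁻ y, K (x,y) * ENNReal.ofReal (2 * g y ^ 2) ≤ ENNReal.ofReal (b/2) * H := by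
    rw [lintegral_lintegral_swap (by fun_prop), hH, ← lintegral_const_mul _ (by fun_prop),
      ← lintegral_indicator hms]
    refine lintegral_mono fun y => ?_
    dsimp only
    rw [lintegral_mul_const _ (by fun_prop)]
    by_cases hy : δ ≤ ‖y‖
    swap
    · have : ∀ x, K (x,y) = 0 := by
        intro x
        refine Set.indicator_of_notMem ?_ _
        rintro ⟨h1, h2, h3⟩
        simp only at h1 h2 h3
        apply hy
        nlinarith
      simp [this]
    have hy0 : 0 < ‖y‖ := hδ.trans_le hy
    rw [Set.indicator_of_mem (by exact hy)]
    have hm3 : MeasurableSet {x : Euc d | ‖y‖ < 2 * R * ‖x‖ ∧ R * ‖x‖ ≤ ‖y‖} :=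
      meas_and2 (by fun_prop) (by fun_prop) (by fun_prop) (by fun_prop)
    have hKint : ∫⁻ x, K (x,y) ≤ ENNReal.ofReal (‖y‖ ^ (-ν) * (b/4)) := by
      calc ∫⁻ x, K (x,y) ≤ ∫⁻ x, ({x : Euc d | ‖y‖ < 2 * R * ‖x‖ ∧ R * ‖x‖ ≤ ‖y‖}.indicator
              (fun _ => ENNReal.ofReal ((‖y‖/(2*R)) ^ (-((d:ℝ)+ν))))) x := by
            refine lintegral_mono fun x => ?_
            by_cases hx : (x,y) ∈ A
            · obtain ⟨h1, h2, h3⟩ := id hx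
              simp only at h1 h2 h3
              rw [Set.indicator_of_mem (show x ∈ {x : Euc d | ‖y‖ < 2 * R * ‖x‖ ∧ R * ‖x‖ ≤ ‖y‖} from ⟨h3, h2⟩)]
              show A.indicator _ _ ≤ _
              rw [Set.indicator_of_mem hx]
              refine ENNReal.ofReal_le_ofReal ?_
              refine Real.rpow_le_rpow_of_nonpos (by positivity) ?_ (by linarith [show (0:ℝ) ≤ d by positivity])
              rw [div_le_iff₀ (by positivity)]
              simp only
              linarith
            · show A.indicator _ _ ≤ _
              rw [Set.indicator_of_notMem hx]
              exact zero_le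
        _ ≤ ENNReal.ofReal ((‖y‖/(2*R)) ^ (-((d:ℝ)+ν))) * 
              ENNReal.ofReal ((‖y‖/(2*R)) ^ ((d:ℝ) + ν) * ‖y‖ ^ (-ν) * (b / 4)) := by
            rw [lintegral_indicator hm3, setLIntegral_const]
            gcongr
            exact hvol2 _ hy0
        _ = _ := by
            rw [← ENNReal.ofReal_mul (by positivity)]
            congr 1
            rw [Real.rpow_neg (by positivity)]
            have : (‖y‖/(2*R)) ^ ((d:ℝ) + ν) ≠ 0 := by positivity
            field_simp
    calc _ ≤ ENNReal.ofReal (‖y‖ ^ (-ν) * (b/4)) * ENNReal.ofReal (2 * g y ^ 2) := by gcongr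
      _ = _ := by
        rw [← ENNReal.ofReal_mul (by positivity), ← ENNReal.ofReal_mul (by positivity)]
        congr 1
        ring
  have hfinal : ENNReal.ofReal (b/2) * H ≤ ENNReal.ofReal (2 * (3*R) ^ ((d:ℝ)+ν)) * S := by
    have h1 := key.trans (hsplit.le.trans (add_le_add_right hsec _))
    have h2 : ENNReal.ofReal b * H = ENNReal.ofReal (b/2) * H + ENNReal.ofReal (b/2) * H := by
      rw [← add_mul, ← ENNReal.ofReal_add (by positivity) (by positivity)]
      congr 2; ring
    rw [h2] at h1
    exact ENNReal.le_of_add_le_add_right (ENNReal.mul_ne_top ENNReal.ofReal_ne_top hfin) h1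
  calc H = ENNReal.ofReal (2/b) * (ENNReal.ofReal (b/2) * H) := by
        rw [← mul_assoc, ← ENNReal.ofReal_mul (by positivity)]
        have : 2 / b * (b/2) = 1 := by field_simp
        rw [this]; simp
    _ ≤ ENNReal.ofReal (2/b) * (ENNReal.ofReal (2 * (3*R) ^ ((d:ℝ)+ν)) * S) := by gcongr
    _ = _ := by
        rw [← mul_assoc, ← ENNReal.ofReal_mul (by positivity)]
        congr 2; ring

lemma hardy0 (d : ℕ) (hd : 2 ≤ d) (ν : ℝ) (hν : 0 < ν) (hν2 : ν < 2) :
    ∃ C > (0:ℝ), ∀ g : Euc d → ℝ, Measurable g → ∫⁻ x, ENNReal.ofReal (g x ^ 2) ≠ ⊤ →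
    ∫⁻ x, ENNReal.ofReal (‖x‖ ^ (-ν) * g x ^ 2) ≤
      ENNReal.ofReal C *
        ∫⁻ x, ∫⁻ y, ENNReal.ofReal ((g x - g y)^2 / ‖x - y‖ ^ ((d : ℝ) + ν)) := by
  have hdR : (2:ℝ) ≤ d := by exact_mod_cast hd
  have hdν : 0 < (d:ℝ) - ν := by linarith
  have : Nonempty (Fin d) := ⟨⟨0, by omega⟩⟩
  set R : ℝ := (32:ℝ) ^ (1/((d:ℝ) - ν)) with hRdef
  have hR : 1 < R := Real.one_lt_rpow (by norm_num) (by positivity)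
  have hRpow : R ^ (d:ℝ) = 32 * R ^ ν := by
    have : R ^ ((d:ℝ) - ν) = 32 := by
      rw [hRdef, ← Real.rpow_mul (by norm_num), one_div, inv_mul_cancel₀ hdν.ne', Real.rpow_one]
    rw [← this, ← Real.rpow_add (by linarith)]
    congr 1; ring
  set ω : ℝ := (volume (Metric.ball (0 : Euc d) 1)).toReal with hω
  have hωfin : volume (Metric.ball (0 : Euc d) 1) ≠ ⊤ := measure_ball_lt_top.ne
  have hω0 : 0 < ω := ENNReal.toReal_pos (Metric.measure_ball_pos _ _ one_pos).ne' hωfin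
  have hfr : Module.finrank ℝ (Euc d) = d := by simp
  have hball : ∀ s : ℝ, 0 ≤ s → volume (Metric.ball (0 : Euc d) s) = ENNReal.ofReal (ω * s ^ (d:ℝ)) := by
    intro s hs
    rw [Measure.addHaar_ball _ _ hs, hfr, ← ENNReal.ofReal_toReal hωfin,
      ← ENNReal.ofReal_mul (by positivity), Real.rpow_natCast, mul_comm]
  have hcball : ∀ s : ℝ, 0 ≤ s → volume (Metric.closedBall (0 : Euc d) s) = ENNReal.ofReal (ω * s ^ (d:ℝ)) := by
    intro s hs
    rw [Measure.addHaar_closedBall _ _ hs, hfr, ← ENNReal.ofReal_toReal hωfin,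
      ← ENNReal.ofReal_mul (by positivity), Real.rpow_natCast, mul_comm]
  have h2d : (2:ℝ) ≤ 2 ^ (d:ℝ) := by
    calc (2:ℝ) = 2 ^ (1:ℝ) := by simp
      _ ≤ _ := Real.rpow_le_rpow_of_exponent_le (by norm_num) (by linarith)
  set b : ℝ := ω * R ^ (d:ℝ) * (2 ^ (d:ℝ) - 1) with hbdef
  have hb : 0 < b := by
    have : 0 < (2:ℝ) ^ (d:ℝ) - 1 := by linarith
    positivity
  have hvol : ∀ s : ℝ, 0 < s → volume {y : Euc d | R * s ≤ ‖y‖ ∧ ‖y‖ < 2 * R * s}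
      = ENNReal.ofReal (b * s ^ (d:ℝ)) := by
    intro s hs
    have : {y : Euc d | R * s ≤ ‖y‖ ∧ ‖y‖ < 2 * R * s} = 
        Metric.ball 0 (2 * R * s) \ Metric.ball 0 (R * s) := by
      ext y; simp [and_comm]
    rw [this, measure_sdiff (Metric.ball_subset_ball (by nlinarith)) 
      measurableSet_ball.nullMeasurableSet measure_ball_lt_top.ne, hball _ (by positivity),
      hball _ (by positivity), ← ENNReal.ofReal_sub _ (by positivity)]
    congr 1
    rw [mul_assoc 2 R s, Real.mul_rpow (x := 2) (by positivity) (by positivity), Real.mul_rpow (by positivity) (by positivity)]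
    rw [hbdef]; ring
  have hvol2 : ∀ s : ℝ, 0 < s → volume {x : Euc d | s < 2 * R * ‖x‖ ∧ R * ‖x‖ ≤ s}
      ≤ ENNReal.ofReal ((s/(2*R)) ^ ((d:ℝ) + ν) * s ^ (-ν) * (b / 4)) := by
    intro s hs
    have : {x : Euc d | s < 2 * R * ‖x‖ ∧ R * ‖x‖ ≤ s} ⊆ Metric.closedBall 0 (s / R) := by
      rintro x ⟨_, h⟩
      rw [mem_closedBall_zero_iff, le_div_iff₀ (by linarith)]
      linarith
    refine (measure_mono this).trans ?_
    rw [hcball _ (by positivity)]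
    refine ENNReal.ofReal_le_ofReal ?_
    rw [Real.div_rpow (by positivity) (by positivity), Real.div_rpow (by positivity) (by positivity),
      Real.rpow_add hs, Real.rpow_neg hs.le, Real.mul_rpow (by positivity) (by positivity),
      Real.rpow_add (by norm_num), Real.rpow_add (by positivity), hbdef, hRpow]
    have h2ν : (2:ℝ) ^ ν ≤ 4 := by
      calc (2:ℝ)^ν ≤ 2 ^ (2:ℝ) := Real.rpow_le_rpow_of_exponent_le (by norm_num) hν2.le
        _ = 4 := by norm_num
    have h2ν0 : (0:ℝ) < 2 ^ ν := by positivity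
    have hsν : s ^ ν ≠ 0 := by positivity
    have hRν : 0 < R ^ ν := by positivity
    have hsd : 0 < s ^ (d:ℝ) := by positivity
    generalize (2:ℝ) ^ ν = p at *
    generalize R ^ ν = q at *
    generalize s ^ ν = t at *
    generalize s ^ (d:ℝ) = u at *
    generalize (2:ℝ) ^ (d:ℝ) = z at *
    have hz : 0 < z := by linarith
    have : u * t / (z * p * (32 * q * q)) * t⁻¹ * (ω * (32 * q) * (z - 1) / 4)
       = ω * (u / (32 * q)) * (8 * (z-1) / (z * p)) := by
      field_simp
      ring
    rw [this]
    refine le_mul_of_one_le_right (by positivity) ?_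
    rw [le_div_iff₀ (by positivity)]
    nlinarith
  refine ⟨4 * (3 * R) ^ ((d:ℝ) + ν) / b, by positivity, fun g hg hg2 => ?_⟩
  have hcore := hardy_core d ν R b hν hR hb hvol hvol2 g hg hg2
  have hms : ∀ n : ℕ, MeasurableSet {x : Euc d | 1 / ((n:ℝ) + 1) ≤ ‖x‖} := fun n =>
    measurableSet_le measurable_const measurable_norm
  have hU : ∫⁻ x, ENNReal.ofReal (‖x‖ ^ (-ν) * g x ^ 2) = 
      ∫⁻ x in ⋃ n : ℕ, {x : Euc d | 1 / ((n:ℝ) + 1) ≤ ‖x‖}, ENNReal.ofReal (‖x‖ ^ (-ν) * g x ^ 2) := by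
    rw [← lintegral_indicator (MeasurableSet.iUnion hms)]
    refine lintegral_congr fun x => ?_
    by_cases hx : x = 0
    · subst hx
      rw [Set.indicator_of_notMem (by
        simp only [Set.mem_iUnion, Set.mem_ofPred_eq, norm_zero, not_exists, not_le]
        intro n; positivity)]
      simp [Real.zero_rpow (neg_ne_zero.mpr hν.ne')]
    · rw [Set.indicator_of_mem]
      obtain ⟨n, hn⟩ := exists_nat_one_div_lt (norm_pos_iff.mpr hx)
      exact Set.mem_iUnion.mpr ⟨n, hn.le⟩
  rw [hU, setLIntegral_iUnion_of_directed]
  · exact iSup_le fun n => hcore _ (by positivity)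
  · refine Monotone.directed_le ?_
    intro m n hmn x hx
    refine le_trans ?_ (show 1 / ((m:ℝ) + 1) ≤ ‖x‖ from hx)
    gcongr

lemma hardy (d : ℕ) (hd : 2 ≤ d) (ν : ℝ) (hν : 0 < ν) (hν2 : ν < 2) :
    ∃ C > (0:ℝ), ∀ g : Euc d → ℝ, Measurable g → ∫⁻ x, ENNReal.ofReal (g x ^ 2) ≠ ⊤ → ∀ a : Euc d,
    ∫⁻ x, ENNReal.ofReal (‖x - a‖ ^ (-ν) * g x ^ 2) ≤
      ENNReal.ofReal C *
        ∫⁻ x, ∫⁻ y, ENNReal.ofReal ((g x - g y)^2 / ‖x - y‖ ^ ((d : ℝ) + ν)) := by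
  obtain ⟨C, hC, h⟩ := hardy0 d hd ν hν hν2
  refine ⟨C, hC, fun g hg hg2 a => ?_⟩
  have h1 := h (fun x => g (x + a)) (by fun_prop)
    (by rwa [lintegral_add_right_eq_self (fun x => ENNReal.ofReal (g x ^ 2)) a])
  rw [← lintegral_add_right_eq_self _ a]
  simp only [add_sub_cancel_right]
  refine h1.trans (le_of_eq ?_)
  congr 1
  rw [← lintegral_add_right_eq_self (fun x => ∫⁻ y, ENNReal.ofReal ((g x - g y)^2 / ‖x - y‖ ^ ((d : ℝ) + ν))) a]
  refine lintegral_congr fun x => ?_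
  rw [← lintegral_add_right_eq_self (fun y => ENNReal.ofReal ((g (x+a) - g y)^2 / ‖x + a - y‖ ^ ((d : ℝ) + ν))) a]
  simp

lemma one_le_jap {d : ℕ} (x : Euc d) : 1 ≤ jap x := by
  unfold jap
  rw [Real.one_le_sqrt]
  nlinarith [sq_nonneg ‖x‖]

lemma measurable_jap {d : ℕ} : Measurable (jap : Euc d → ℝ) := by
  unfold jap
  fun_prop

lemma jap_le {d : ℕ} (x : Euc d) : jap x ≤ 1 + ‖x‖ := by
  unfold jap
  rw [Real.sqrt_le_left (by positivity)]
  nlinarith [norm_nonneg x]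

lemma jap_rpow_le {d : ℕ} (x : Euc d) (m : ℝ) (hm : 0 ≤ m) :
    jap x ^ m ≤ 2 ^ m * (1 + ‖x‖ ^ m) := by
  have h1 := one_le_jap x
  have h2 := jap_le x
  have hp : (0:ℝ) ≤ ‖x‖ ^ m := by positivity
  rcases le_total ‖x‖ 1 with h | h
  · calc jap x ^ m ≤ 2 ^ m := Real.rpow_le_rpow (by linarith) (by linarith) hm
      _ ≤ _ := le_mul_of_one_le_right (by positivity) (by linarith)
  · calc jap x ^ m ≤ (2 * ‖x‖) ^ m := Real.rpow_le_rpow (by linarith) (by linarith) hm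
      _ = 2 ^ m * ‖x‖ ^ m := Real.mul_rpow (by norm_num) (by positivity)
      _ ≤ _ := by gcongr; linarith

lemma young_pt (ν γ lam m t J : ℝ) (hlam : 0 < lam) (hlν : lam < ν)
    (hm : -γ * lam / (ν - lam) ≤ m) (ht : 0 ≤ t) (hJ : 1 ≤ J) :
    t ^ (-lam) ≤ t ^ (-ν) * J ^ γ + J ^ m := by
  have hJ0 : 0 < J := by linarith
  rcases ht.eq_or_lt with rfl | ht
  · rw [Real.zero_rpow (by linarith)]
    positivity
  have hs : 0 < ν - lam := by linarith
  rcases le_or_gt (t ^ (ν - lam)) (J ^ γ) with h | h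
  · have : t ^ (-lam) = t ^ (-ν) * t ^ (ν - lam) := by
      rw [← Real.rpow_add ht]; congr 1; ring
    rw [this]
    have : 0 ≤ J ^ m := by positivity
    have : t ^ (-ν) * t ^ (ν - lam) ≤ t ^ (-ν) * J ^ γ := by gcongr
    linarith
  · have h1 : t ^ (-lam) = (t ^ (ν - lam)) ^ (-lam / (ν - lam)) := by
      rw [← Real.rpow_mul ht.le]; congr 1; field_simp
    have h2 : (t ^ (ν - lam)) ^ (-lam / (ν - lam)) ≤ (J ^ γ) ^ (-lam / (ν - lam)) :=
      Real.rpow_le_rpow_of_nonpos (by positivity) h.le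
        (div_nonpos_of_nonpos_of_nonneg (by linarith) hs.le)
    have h3 : (J ^ γ) ^ (-lam / (ν - lam)) ≤ J ^ m := by
      rw [← Real.rpow_mul hJ0.le]
      refine Real.rpow_le_rpow_of_exponent_le hJ (le_trans (le_of_eq ?_) hm)
      ring
    have : 0 ≤ t ^ (-ν) * J ^ γ := by positivity
    linarith

lemma lintegral_perm {d N : ℕ} (σ : Equiv.Perm (Fin N)) (H : (Fin N → Euc d) → ℝ≥0∞) :
    ∫⁻ V, H (V ∘ σ) = ∫⁻ V, H V := by
  have h := (volume_measurePreserving_piCongrLeft (fun _ : Fin N => Euc d) σ.symm)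
  rw [← h.lintegral_comp_emb (MeasurableEquiv.measurableEmbedding _) H]
  refine lintegral_congr fun V => ?_
  congr 1
  funext k
  have := Equiv.piCongrLeft_apply_apply (P := fun _ : Fin N => Euc d) σ.symm V (σ k)
  simp only [Equiv.symm_apply_apply] at this
  rw [MeasurableEquiv.coe_piCongrLeft, this]
  rfl

/-- the `i`-th term of the Fisher information. -/
def fisherTerm (d N : ℕ) (ν γ : ℝ) (G : (Fin N → Euc d) → ℝ) (i : Fin N) : ℝ≥0∞ :=
  ∫⁻ V : Fin N → Euc d, ∫⁻ w : Euc d,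
    ENNReal.ofReal ((jap (V i) ^ (γ/2) * Real.sqrt (G V)
      - jap w ^ (γ/2) * Real.sqrt (G (Function.update V i w)))^2
      / ‖V i - w‖ ^ ((d : ℝ) + ν))

lemma fisherTerm_eq (d N : ℕ) (ν γ : ℝ) (F : (Fin N → Euc d) → ℝ) (hF : IsSymDensity d N F)
    (i k : Fin N) : fisherTerm d N ν γ F k = fisherTerm d N ν γ F i := by
  unfold fisherTerm
  conv_lhs => rw [← lintegral_perm (Equiv.swap i k)]
  refine lintegral_congr fun V => lintegral_congr fun w => ?_
  have h1 : Function.update (V ∘ (Equiv.swap i k)) k w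
      = (Function.update V i w) ∘ (Equiv.swap i k) := by
    have := Function.update_comp_equiv V (Equiv.swap i k) i w
    rw [this]
    simp
  rw [h1, hF.2, hF.2]
  simp

lemma fisherInfo_eq (d N : ℕ) (hN : 2 ≤ N) (ν γ : ℝ) (F : (Fin N → Euc d) → ℝ)
    (hF : IsSymDensity d N F) (i : Fin N) :
    fisherInfo d N ν γ F = fisherTerm d N ν γ F i := by
  have : fisherInfo d N ν γ F = (N : ℝ≥0∞)⁻¹ * ∑ k : Fin N, fisherTerm d N ν γ F k := rfl
  rw [this, Finset.sum_congr rfl (fun k _ => fisherTerm_eq d N ν γ F hF i k)]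
  simp only [Finset.sum_const, Finset.card_univ, Fintype.card_fin, nsmul_eq_mul]
  rw [← mul_assoc, ENNReal.inv_mul_cancel, one_mul]
  · simp; omega
  · exact ENNReal.natCast_ne_top N

lemma moment_eq (d N : ℕ) (m : ℝ) (F : (Fin N → Euc d) → ℝ) (hF : IsSymDensity d N F)
    (i k : Fin N) : ∫⁻ V : Fin N → Euc d, ENNReal.ofReal (‖V k‖ ^ m * F V)
      = ∫⁻ V : Fin N → Euc d, ENNReal.ofReal (‖V i‖ ^ m * F V) := by
  conv_lhs => rw [← lintegral_perm (Equiv.swap i k)]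
  refine lintegral_congr fun V => ?_
  rw [hF.2]
  simp

lemma lintegral_split {d n : ℕ} (i : Fin (n+1)) (H : (Fin (n+1) → Euc d) → ℝ≥0∞)
    (hH : Measurable H) :
    ∫⁻ V, H V = ∫⁻ U : Fin n → Euc d, ∫⁻ v : Euc d, H (i.insertNth v U) := by
  have h := (volume_preserving_piFinSuccAbove (fun _ : Fin (n+1) => Euc d) i).symm
  rw [← h.lintegral_comp_emb (MeasurableEquiv.measurableEmbedding _) H]
  have hm : Measurable fun p : Euc d × (Fin n → Euc d) =>
      H ((MeasurableEquiv.piFinSuccAbove (fun _ : Fin (n+1) => Euc d) i).symm p) :=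
    hH.comp (MeasurableEquiv.measurable _)
  exact lintegral_prod_symm _ hm.aemeasurable

lemma measurable_insertNth' {d n : ℕ} (i : Fin (n+1)) (U : Fin n → Euc d) :
    Measurable (fun v : Euc d => (i.insertNth v U : Fin (n+1) → Euc d)) := by
  have h := (MeasurableEquiv.piFinSuccAbove (fun _ : Fin (n+1) => Euc d) i).symm.measurable
  exact h.comp (measurable_id.prodMk measurable_const)

lemma hardy_N (d : ℕ) (hd : 2 ≤ d) (ν γ : ℝ) (hν : 0 < ν) (hν2 : ν < 2) (hγ : γ < 0) :
    ∃ C > (0:ℝ), ∀ N : ℕ, ∀ F : (Fin N → Euc d) → ℝ, IsProbDensity F →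
      ∀ i j : Fin N, i ≠ j →
      ∫⁻ V : Fin N → Euc d, ENNReal.ofReal (‖V i - V j‖ ^ (-ν) * jap (V i) ^ γ * F V) ≤
        ENNReal.ofReal C * fisherTerm d N ν γ F i := by
  obtain ⟨C, hC, h⟩ := hardy d hd ν hν hν2
  refine ⟨C, hC, fun N F hF i j hij => ?_⟩
  obtain ⟨hFm, hF0, hF1⟩ := hF
  obtain ⟨n, rfl⟩ : ∃ n, N = n + 1 := ⟨N - 1, by have := i.2; omega⟩
  obtain ⟨j', rfl⟩ := Fin.exists_succAbove_eq hij.symm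
  have hjm := measurable_jap (d := d)
  have hsqrt : ∀ V, Real.sqrt (F V) ^ 2 = F V := fun V => Real.sq_sqrt (hF0 V)
  have hjsq : ∀ x : Euc d, (jap x ^ (γ/2)) ^ 2 = jap x ^ γ := fun x => by
    have := one_le_jap x
    rw [← Real.rpow_natCast, ← Real.rpow_mul (by linarith)]
    congr 1; push_cast; ring
  unfold fisherTerm
  have hup : Measurable (fun p : (Fin (n+1) → Euc d) × Euc d => Function.update p.1 i p.2) :=
    measurable_update'
  have hm1 : Measurable (fun V : Fin (n+1) → Euc d => ∫⁻ w : Euc d,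
    ENNReal.ofReal ((jap (V i) ^ (γ/2) * Real.sqrt (F V)
      - jap w ^ (γ/2) * Real.sqrt (F (Function.update V i w)))^2
      / ‖V i - w‖ ^ ((d : ℝ) + ν))) := by
    refine Measurable.lintegral_prod_right' (f := fun p : (Fin (n+1) → Euc d) × Euc d =>
      ENNReal.ofReal ((jap (p.1 i) ^ (γ/2) * Real.sqrt (F p.1)
      - jap p.2 ^ (γ/2) * Real.sqrt (F (Function.update p.1 i p.2)))^2
      / ‖p.1 i - p.2‖ ^ ((d : ℝ) + ν))) ?_
    have := hFm.comp hup
    simp only [Function.comp_def] at this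
    fun_prop
  rw [lintegral_split i _ hm1, lintegral_split i _ (by fun_prop)]
  have hae : ∀ᵐ U : Fin n → Euc d, ∫⁻ v : Euc d, ENNReal.ofReal (F (i.insertNth v U)) < ⊤ := by
    have e := lintegral_split i (fun V => ENNReal.ofReal (F V)) (by fun_prop)
    refine ae_lt_top' ?_ ?_
    · have hm : Measurable fun p : Euc d × (Fin n → Euc d) =>
          ENNReal.ofReal (F ((MeasurableEquiv.piFinSuccAbove (fun _ : Fin (n+1) => Euc d) i).symm p)) :=
        (hFm.comp (MeasurableEquiv.measurable _)).ennreal_ofReal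
      exact hm.lintegral_prod_left'.aemeasurable
    · rw [← e, hF1]; exact ENNReal.one_ne_top
  have hconst : ∀ X : (Fin n → Euc d) → ℝ≥0∞, ENNReal.ofReal C * ∫⁻ U, X U 
      = ∫⁻ U, ENNReal.ofReal C * X U := fun X => (lintegral_const_mul' _ _ ENNReal.ofReal_ne_top).symm
  rw [hconst]
  refine lintegral_mono_ae ?_
  filter_upwards [hae] with U hU
  have hins := measurable_insertNth' i U
  have hFi := hFm.comp hins
  simp only [Function.comp_def] at hFi
  have hg := h (fun v => jap v ^ (γ/2) * Real.sqrt (F (i.insertNth v U))) (by fun_prop) (by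
    refine ne_top_of_le_ne_top hU.ne (lintegral_mono fun v => ENNReal.ofReal_le_ofReal ?_)
    rw [mul_pow, hsqrt, hjsq]
    exact mul_le_of_le_one_left (hF0 _)
      (Real.rpow_le_one_of_one_le_of_nonpos (one_le_jap v) hγ.le)) (U j')
  simp only [mul_pow, hsqrt, hjsq] at hg
  simp only [Fin.insertNth_apply_same, Fin.insertNth_apply_succAbove, Fin.update_insertNth]
  refine le_trans (le_of_eq ?_) hg
  refine lintegral_congr fun v => ?_
  rw [mul_assoc]


/-- Hardy–Littlewood–Sobolev-type inequality for non-tensorized measures: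
the singular moment `∫ |v_i - v_j|^{-λ} F^N` is controlled by the weighted fractional
Fisher information, a negative moment of `v₁`, and a constant. -/
theorem stmt_1 (d : ℕ) (hd : 2 ≤ d) (ν γ lam r : ℝ)
    (hν : ν ∈ Set.Ioo (0 : ℝ) 2) (hγ : γ < 0) (hlam : lam ∈ Set.Ioo 0 ν)
    (hr : r ∈ Set.Ioo
      (max (max ((d : ℝ)/((d : ℝ)+ν)) ((ν+lam)/(2*ν))) ((2*(d : ℝ) - (ν - lam))/(2*(d : ℝ)))) 1) :
    ∃ C > (0 : ℝ), ∀ N : ℕ, (hN : 2 ≤ N) → ∀ F : (Fin N → Euc d) → ℝ, IsSymDensity d N F →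
      ∀ i j : Fin N, i ≠ j →
        (∫⁻ V : Fin N → Euc d, ENNReal.ofReal (‖V i - V j‖ ^ (-lam) * F V))
          ≤ ENNReal.ofReal C * (fisherInfo d N ν γ F
            + (∫⁻ V : Fin N → Euc d,
                ENNReal.ofReal (‖V ⟨0, by omega⟩‖ ^ (-γ * r/(1-r)) * F V))
            + 1) := by
  obtain ⟨hν0, hν2⟩ := hν
  obtain ⟨hl0, hlν⟩ := hlam
  obtain ⟨hr1, hr2⟩ := hr
  have hr3 : (ν+lam)/(2*ν) < r :=
    lt_of_le_of_lt ((le_max_right _ _).trans (le_max_left _ _)) hr1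
  rw [div_lt_iff₀ (by linarith)] at hr3
  have hr0 : 0 < r := by
    by_contra hcon
    nlinarith
  set m : ℝ := -γ * r / (1 - r) with hmdef
  have hm0 : 0 ≤ m := div_nonneg (mul_nonneg (by linarith) hr0.le) (by linarith)
  have hm : -γ * lam / (ν - lam) ≤ m := by
    rw [hmdef, div_le_div_iff₀ (by linarith) (by linarith), mul_assoc, mul_assoc]
    refine mul_le_mul_of_nonneg_left ?_ (by linarith)
    nlinarith
  obtain ⟨C, hC, hH⟩ := hardy_N d hd ν γ hν0 hν2 hγ
  refine ⟨C + 2 ^ m, by positivity, fun N hN F hF i j hij => ?_⟩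
  have hFs := hF
  obtain ⟨⟨hFm, hF0, hF1⟩, hsym⟩ := hF
  have hjm := measurable_jap (d := d)
  rw [fisherInfo_eq d N hN ν γ F hFs i, moment_eq d N m F hFs i ⟨0, by omega⟩]
  set M := ∫⁻ V : Fin N → Euc d, ENNReal.ofReal (‖V i‖ ^ m * F V) with hM
  set T := fisherTerm d N ν γ F i with hT
  calc ∫⁻ V : Fin N → Euc d, ENNReal.ofReal (‖V i - V j‖ ^ (-lam) * F V)
      ≤ ∫⁻ V : Fin N → Euc d, (ENNReal.ofReal (‖V i - V j‖ ^ (-ν) * jap (V i) ^ γ * F V)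
          + ENNReal.ofReal (2 ^ m) * (ENNReal.ofReal (F V) + ENNReal.ofReal (‖V i‖ ^ m * F V))) := by
        refine lintegral_mono fun V => ?_
        have hj := one_le_jap (V i)
        have hj0 : 0 < jap (V i) := by linarith
        have hFV := hF0 V
        rw [← ENNReal.ofReal_add (by positivity) (by positivity),
          ← ENNReal.ofReal_mul (by positivity), ← ENNReal.ofReal_add (by positivity) (by positivity)]
        refine ENNReal.ofReal_le_ofReal ?_
        have h1 := young_pt ν γ lam m ‖V i - V j‖ (jap (V i)) hl0 hlν hm (norm_nonneg _) hj
        have h2 := jap_rpow_le (V i) m hm0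
        have h3 := mul_le_mul_of_nonneg_right (h1.trans (add_le_add_right h2 _)) hFV
        refine h3.trans (le_of_eq ?_)
        ring
    _ = (∫⁻ V : Fin N → Euc d, ENNReal.ofReal (‖V i - V j‖ ^ (-ν) * jap (V i) ^ γ * F V))
          + ENNReal.ofReal (2 ^ m) * (1 + M) := by
        rw [lintegral_add_left (by fun_prop), lintegral_const_mul _ (by fun_prop),
          lintegral_add_left (by fun_prop), hF1]
    _ ≤ ENNReal.ofReal C * T + ENNReal.ofReal (2 ^ m) * (1 + M) := by
        gcongr
        exact hH N F hFs.1 i j hij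
    _ ≤ ENNReal.ofReal (C + 2 ^ m) * (T + M + 1) := by
        rw [ENNReal.ofReal_add hC.le (by positivity), add_mul]
        refine add_le_add (mul_le_mul_right ?_ _) (mul_le_mul_right ?_ _)
        · rw [add_assoc]; exact le_self_add
        · rw [add_comm 1 M, add_assoc]; exact le_add_self


end
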